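/- Assume μ > r. For every y ∈ [0,1), there exists a unique b_y ∈ (1, 1 + μ/r) such that the solution w_{b_y} of r w = (μ - α((1-x)^+))w' + (σ²/2)w'' with w'(b_y)=1, w''(b_y)=0 satisfies w_{b_y}(y) = y. -/

import Mathlib

/-!
Write `s = σ² / 2`, `p x = μ - α (max (1 - x) 0)` and `B = 1 + μ / r`, so that each `W b` solves
`s w'' = r w - p w'` on `[0, b]`. For `b ≥ 1` the equation at `b` gives `W b b = μ / r`.

The main tool is a maximum principle (`IsSol.neg_and_pos`): a solution with `w < 0` and `w' ≥ 0`
at the right end point of an interval keeps `w < 0` and `w' > 0` on the rest of it. Indeed, with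
the integrating factor `m = exp (∫ p / s)` one has `(m w')' = m r w / s`, so `m w'` decreases as
long as `w < 0`. Applied to perturbations `v + ε z`, it also gives uniqueness (`IsSol.eq_zero`).

* On `[1, B]` the drift `p` is the constant `μ`, so `-(W B)'` is a solution too, and the maximum
  principle yields `(W B)'' < 0` and `(W B)' > 1` on `[1, B)`. Hence `W B 1 < 0`, and a further
  application on `[0, 1]` gives `W B y < 0 ≤ y`.
* By uniqueness `W b` is a translate of `W B` on `[1, b]`, so `W b` and its derivative take at `1`
  the values of `W B` and its derivative at `1 + B - b`. For `b₁ < b₂` the difference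
  `W b₂ - W b₁` is then negative with positive derivative at `1`, so it is negative on `[0, 1]`:
  `b ↦ W b y` is strictly decreasing. By uniqueness on `[0, 1]`, `W b y` is a combination of
  `W 1 y` and `W B y` with coefficients continuous in `b`, so it is continuous in `b`.
* For `w = W 1`, differentiating the equation gives `(m w'')' = m (r - α' (1 - x)) w' / s ≤ 0`
  wherever `w' ≥ 0`, hence `w'' ≥ 0` and `w' ≤ 1` from the last zero of `w'` up to `1`; left of
  that zero `w' ≤ 0` by the maximum principle. So `x ↦ w x - x` is antitone on `[0, 1]`, with value
  `μ / r - 1 > 0` at `1`, and `W 1 y > y`.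

The intermediate value theorem and strict monotonicity conclude.
-/

open Set

/-- `v` solves `s v'' = r v - p v'` on `[a, c]`, written as a first-order system with `g = v'`:
the equations hold in the interior, and both functions are continuous up to the end points. -/
structure IsSol (r s : ℝ) (p : ℝ → ℝ) (a c : ℝ) (v g : ℝ → ℝ) : Prop where
  cv : ContinuousOn v (Icc a c)
  cg : ContinuousOn g (Icc a c)
  dv : ∀ x ∈ Ioo a c, HasDerivAt v (g x) x
  dg : ∀ x ∈ Ioo a c, HasDerivAt g ((r * v x - p x * g x) / s) x

namespace IsSol

variable {r s : ℝ} {p : ℝ → ℝ} {a c : ℝ} {v g v' g' : ℝ → ℝ}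

lemma lin (h : IsSol r s p a c v g) (h' : IsSol r s p a c v' g') (k l : ℝ) :
    IsSol r s p a c (fun x => k * v x + l * v' x) (fun x => k * g x + l * g' x) where
  cv := (h.cv.const_mul k).add (h'.cv.const_mul l)
  cg := (h.cg.const_mul k).add (h'.cg.const_mul l)
  dv x hx := ((h.dv x hx).const_mul k).add ((h'.dv x hx).const_mul l)
  dg x hx := by
    refine HasDerivAt.congr_deriv (((h.dg x hx).const_mul k).add ((h'.dg x hx).const_mul l)) ?_
    ring

lemma mono (h : IsSol r s p a c v g) {a' c' : ℝ} (ha : a ≤ a') (hc : c' ≤ c) :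
    IsSol r s p a' c' v g where
  cv := h.cv.mono (Icc_subset_Icc ha hc)
  cg := h.cg.mono (Icc_subset_Icc ha hc)
  dv x hx := h.dv x (Ioo_subset_Ioo ha hc hx)
  dg x hx := h.dg x (Ioo_subset_Ioo ha hc hx)

/-- On an interval where `v < 0`, a derivative that is nonnegative at the right end is positive:
with `m = exp (∫ p / s)` one has `(m g)' = m r v / s < 0`. -/
lemma pos_of_neg (hr : 0 < r) (hs : 0 < s) (hp : Continuous p) (h : IsSol r s p a c v g)
    (hg : 0 ≤ g c) (hv : ∀ x ∈ Ioo a c, v x < 0) : ∀ x ∈ Ico a c, 0 < g x := by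
  intro x hx
  set P : ℝ → ℝ := fun x => ∫ t in (0:ℝ)..x, p t / s with hP
  have hPd : ∀ x, HasDerivAt P (p x / s) x := fun x =>
    (hp.div_const s).integral_hasStrictDerivAt 0 x |>.hasDerivAt
  have hPc : Continuous P := continuous_iff_continuousAt.2 fun x => (hPd x).continuousAt
  have hanti : StrictAntiOn (fun x => Real.exp (P x) * g x) (Icc a c) := by
    refine strictAntiOn_of_deriv_neg (convex_Icc a c)
      ((Real.continuous_exp.comp hPc).continuousOn.mul h.cg) fun z hz => ?_
    rw [interior_Icc] at hz
    have hd := ((hPd z).exp).mul (h.dg z hz)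
    have e : deriv (fun x => Real.exp (P x) * g x) z = Real.exp (P z) * (r * v z / s) := by
      refine (HasDerivAt.deriv hd).trans ?_
      ring
    rw [e]
    exact mul_neg_of_pos_of_neg (Real.exp_pos _)
      (div_neg_of_neg_of_pos (mul_neg_of_pos_of_neg hr (hv z hz)) hs)
  have := hanti ⟨hx.1, hx.2.le⟩ ⟨hx.1.trans hx.2.le, le_rfl⟩ hx.2
  have h1 : 0 < Real.exp (P x) * g x :=
    lt_of_le_of_lt (mul_nonneg (Real.exp_pos _).le hg) this
  exact pos_of_mul_pos_right h1 (Real.exp_pos _).le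

lemma strictMono (h : IsSol r s p a c v g) (hg : ∀ x ∈ Ioo a c, 0 < g x) :
    StrictMonoOn v (Icc a c) := by
  refine strictMonoOn_of_deriv_pos (convex_Icc a c) h.cv fun z hz => ?_
  rw [interior_Icc] at hz
  rw [(h.dv z hz).deriv]
  exact hg z hz

/-- Maximum principle: `v < 0` and `v' ≥ 0` at the right end propagate to the left. -/
lemma neg_and_pos (hr : 0 < r) (hs : 0 < s) (hp : Continuous p) (h : IsSol r s p a c v g)
    (hv : v c < 0) (hg : 0 ≤ g c) :
    (∀ x ∈ Icc a c, v x < 0) ∧ ∀ x ∈ Ico a c, 0 < g x := by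
  have key : ∀ x ∈ Icc a c, v x < 0 := by
    by_contra! hcon
    obtain ⟨x, hx, hvx⟩ := hcon
    -- the largest point where `v ≥ 0`
    have hcl : IsCompact (Icc a c ∩ v ⁻¹' Ici 0) :=
      isCompact_Icc.of_isClosed_subset
        (h.cv.preimage_isClosed_of_isClosed isClosed_Icc isClosed_Ici) inter_subset_left
    obtain ⟨z, hz, hmax⟩ := hcl.exists_isGreatest ⟨x, hx, hvx⟩
    have hz0 : 0 ≤ v z := hz.2
    have hzc : z < c := lt_of_le_of_ne hz.1.2 (by rintro rfl; linarith)
    have h' := h.mono hz.1.1 (le_refl c)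
    have hneg : ∀ x ∈ Ioo z c, v x < 0 := by
      intro x hx
      by_contra! hge
      exact absurd (hmax ⟨⟨hz.1.1.trans hx.1.le, hx.2.le⟩, hge⟩) (not_le.2 hx.1)
    have hpos := h'.pos_of_neg hr hs hp hg hneg
    have := h'.strictMono (fun x hx => hpos x ⟨hx.1.le, hx.2⟩) ⟨le_rfl, hzc.le⟩
      ⟨hzc.le, le_rfl⟩ hzc
    linarith
  exact ⟨key, h.pos_of_neg hr hs hp hg fun x hx => key x ⟨hx.1.le, hx.2.le⟩⟩

/-- Uniqueness of the backward Cauchy problem, from the maximum principle applied to `v + ε z`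
and `-v + ε z`, where `z` is any solution with `z < 0` and `z' ≥ 0` at the right end. -/
lemma eq_zero (hr : 0 < r) (hs : 0 < s) (hp : Continuous p) (h : IsSol r s p a c v g)
    (hv : v c = 0) (hg : g c = 0) {z k : ℝ → ℝ} (hz : IsSol r s p a c z k)
    (hzc : z c < 0) (hkc : 0 ≤ k c) :
    ∀ x ∈ Ico a c, v x = 0 ∧ g x = 0 := by
  intro x hx
  have hx' : x ∈ Icc a c := ⟨hx.1, hx.2.le⟩
  have lim : ∀ A C : ℝ, (∀ ε : ℝ, 0 < ε → A + ε * C < 0) → A ≤ 0 := by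
    intro A C hAC
    by_contra! hA
    have h1 := hAC (A / (|C| + 1)) (by positivity)
    have h2 : A / (|C| + 1) * (|C| + 1) = A := by field_simp
    have h3 : 0 < A / (|C| + 1) := by positivity
    nlinarith [neg_abs_le C]
  have main : ∀ l : ℝ, l * v x ≤ 0 ∧ -(l * g x) ≤ 0 := by
    intro l
    have P : ∀ ε : ℝ, 0 < ε → l * v x + ε * z x < 0 ∧ 0 < l * g x + ε * k x := by
      intro ε hε
      obtain ⟨h1, h2⟩ := (h.lin hz l ε).neg_and_pos hr hs hp
        (by simp only [hv]; nlinarith) (by simp only [hg]; nlinarith)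
      exact ⟨h1 x hx', h2 x hx⟩
    exact ⟨lim _ (z x) fun ε hε => (P ε hε).1,
      lim _ (-k x) fun ε hε => by linarith [(P ε hε).2]⟩
  have h1 := main 1
  have h2 := main (-1)
  constructor <;> linarith [h1.1, h1.2, h2.1, h2.2]

end IsSol

/-- The comparison `w x > x` for the solution with free boundary at `1`. Here `p` is the drift,
with `p' ≥ r` on `(0, 1)`. -/
lemma gt_id_of_sol {r s μ : ℝ} {p q w : ℝ → ℝ} (hr : 0 < r) (hs : 0 < s) (hμr : r < μ)
    (hp : Continuous p) (hpd : ∀ x ∈ Ioo (0:ℝ) 1, HasDerivAt p (q x) x)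
    (hq : ∀ x ∈ Ioo (0:ℝ) 1, r ≤ q x) (hw : ContDiff ℝ 2 w)
    (hode : ∀ x ∈ Icc (0:ℝ) 1, deriv (deriv w) x = (r * w x - p x * deriv w x) / s)
    (h : IsSol r s p 0 1 w (deriv w))
    (h0 : w 1 = μ / r) (h1 : deriv w 1 = 1) (h2 : deriv (deriv w) 1 = 0) :
    ∀ y ∈ Icc (0:ℝ) 1, y < w y := by
  have hμ : 1 < μ / r := (one_lt_div hr).2 hμr
  have cw2 : Continuous (deriv (deriv w)) := by
    have := hw.continuous_iteratedDeriv 2 le_rfl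
    simpa [iteratedDeriv_succ] using this
  have cw1 : Continuous (deriv w) := hw.continuous_deriv (by norm_num)
  have dw : Differentiable ℝ w := hw.differentiable (by norm_num)
  have dw1 : Differentiable ℝ (deriv w) := by
    have : ContDiff ℝ 1 (deriv w) := ((contDiff_succ_iff_deriv (n := 1)).1 hw).2.2
    exact this.differentiable (by norm_num)
  -- where `w' ≥ 0` all the way up to `1`, `w` is convex and hence `w' ≤ 1`
  have conv : ∀ z ∈ Icc (0:ℝ) 1, (∀ x ∈ Ioo z 1, 0 ≤ deriv w x) →
      ∀ x ∈ Icc z 1, deriv w x ≤ 1 := by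
    intro z hz hpos
    set P : ℝ → ℝ := fun x => ∫ t in (0:ℝ)..x, p t / s with hP
    have hPd : ∀ x, HasDerivAt P (p x / s) x := fun x =>
      (hp.div_const s).integral_hasStrictDerivAt 0 x |>.hasDerivAt
    have hPc : Continuous P := continuous_iff_continuousAt.2 fun x => (hPd x).continuousAt
    have hd : ∀ x ∈ Ioo z 1, HasDerivAt (fun x => Real.exp (P x) * deriv (deriv w) x)
        (Real.exp (P x) * ((r - q x) * deriv w x / s)) x := by
      intro x hx
      have hx0 : x ∈ Ioo (0:ℝ) 1 := ⟨hz.1.trans_lt hx.1, hx.2⟩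
      have e1 : HasDerivAt (deriv (deriv w))
          ((r * deriv w x - (q x * deriv w x + p x * deriv (deriv w) x)) / s) x := by
        have := (((dw x).hasDerivAt.const_mul r).sub
          ((hpd x hx0).mul (dw1 x).hasDerivAt)).div_const s
        refine this.congr_of_eventuallyEq ?_
        filter_upwards [Ioo_mem_nhds hx0.1 hx0.2] with t ht
        exact hode t ⟨ht.1.le, ht.2.le⟩
      refine HasDerivAt.congr_deriv (((hPd x).exp).mul e1) ?_
      ring
    have anti : AntitoneOn (fun x => Real.exp (P x) * deriv (deriv w) x) (Icc z 1) := by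
      refine antitoneOn_of_deriv_nonpos (convex_Icc z 1)
        ((Real.continuous_exp.comp hPc).mul cw2).continuousOn ?_ ?_
      · intro x hx
        rw [interior_Icc] at hx
        exact (hd x hx).differentiableAt.differentiableWithinAt
      · intro x hx
        rw [interior_Icc] at hx
        rw [(hd x hx).deriv]
        have hx0 : x ∈ Ioo (0:ℝ) 1 := ⟨hz.1.trans_lt hx.1, hx.2⟩
        refine mul_nonpos_of_nonneg_of_nonpos (Real.exp_pos _).le
          (div_nonpos_of_nonpos_of_nonneg ?_ hs.le)
        exact mul_nonpos_of_nonpos_of_nonneg (by linarith [hq x hx0]) (hpos x hx)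
    have nonneg : ∀ x ∈ Icc z 1, 0 ≤ deriv (deriv w) x := by
      intro x hx
      have := anti hx ⟨hz.2, le_rfl⟩ hx.2
      simp only [h2, mul_zero] at this
      exact nonneg_of_mul_nonneg_right this (Real.exp_pos _)
    have mono : MonotoneOn (deriv w) (Icc z 1) := by
      refine monotoneOn_of_deriv_nonneg (convex_Icc z 1) cw1.continuousOn
        dw1.differentiableOn ?_
      intro x hx
      exact nonneg x (interior_subset hx)
    intro x hx
    rw [← h1]
    exact mono hx ⟨hz.2, le_rfl⟩ hx.2
  have anti_of : ∀ z ∈ Icc (0:ℝ) 1, (∀ x ∈ Icc z 1, deriv w x ≤ 1) →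
      ∀ x ∈ Icc z 1, x < w x := by
    intro z hz hle
    have dD : ∀ x, HasDerivAt (fun x => w x - x) (deriv w x - 1) x := fun x =>
      (dw x).hasDerivAt.sub (hasDerivAt_id x)
    have anti : AntitoneOn (fun x => w x - x) (Icc z 1) := by
      refine antitoneOn_of_deriv_nonpos (convex_Icc z 1)
        (fun x _ => (dD x).continuousAt.continuousWithinAt)
        (fun x _ => (dD x).differentiableAt.differentiableWithinAt) ?_
      intro x hx
      rw [(dD x).deriv]
      linarith [hle x (interior_subset hx)]
    intro x hx
    have := anti hx ⟨hz.2, le_rfl⟩ hx.2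
    simp only [h0] at this
    linarith
  have le_one : ∀ x ∈ Icc (0:ℝ) 1, deriv w x ≤ 1 := by
    by_cases hall : ∀ x ∈ Ioo (0:ℝ) 1, 0 ≤ deriv w x
    · exact conv 0 ⟨le_rfl, zero_le_one⟩ hall
    · push Not at hall
      obtain ⟨x, hx, hneg⟩ := hall
      -- the last point where `w' ≤ 0`; there `w > 0`, so `-w` obeys the maximum principle
      have hcl : IsCompact (Icc (0:ℝ) 1 ∩ deriv w ⁻¹' Iic 0) :=
        isCompact_Icc.inter_right (isClosed_Iic.preimage cw1)
      obtain ⟨z, hz, hmax⟩ := hcl.exists_isGreatest ⟨x, ⟨hx.1.le, hx.2.le⟩, hneg.le⟩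
      have hz0 : deriv w z ≤ 0 := hz.2
      have hpos : ∀ x ∈ Ioo z 1, 0 ≤ deriv w x := by
        intro x hx
        by_contra! hlt
        exact absurd (hmax ⟨⟨hz.1.1.trans hx.1.le, hx.2.le⟩, hlt.le⟩) (not_le.2 hx.1)
      have hle := conv z hz.1 hpos
      have hwz : z < w z := anti_of z hz.1 hle z ⟨le_rfl, hz.1.2⟩
      have hsol := (h.lin h (-1) 0).mono le_rfl hz.1.2
      obtain ⟨-, hg⟩ := hsol.neg_and_pos hr hs hp
        (by linarith [hz.1.1]) (by linarith)
      intro t ht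
      rcases lt_or_ge t z with htz | htz
      · have := hg t ⟨ht.1, htz⟩
        linarith
      · exact hle t ⟨htz, ht.2⟩
  exact anti_of 0 ⟨le_rfl, zero_le_one⟩ le_one

theorem stmt_12 (μ σ r : ℝ) (hσ : 0 < σ) (hr : 0 < r) (hμr : r < μ)
    (α : ℝ → ℝ) (hα : ContDiff ℝ 1 α) (hαconv : ConvexOn ℝ (Ici 0) α)
    (hαmono : StrictMonoOn α (Ici 0)) (hα0 : α 0 = 0)
    (hα' : ∀ x ≥ (0:ℝ), r ≤ deriv α x)
    (y : ℝ) (hy : y ∈ Ico (0:ℝ) 1)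
    (W : ℝ → ℝ → ℝ) (hW : ∀ b, ContDiff ℝ 2 (W b))
    (hode : ∀ b > (0:ℝ), ∀ x ∈ Icc (0:ℝ) b,
      r * W b x = (μ - α (max (1 - x) 0)) * deriv (W b) x
        + σ ^ 2 / 2 * deriv (deriv (W b)) x)
    (hW'b : ∀ b > (0:ℝ), deriv (W b) b = 1)
    (hW''b : ∀ b > (0:ℝ), deriv (deriv (W b)) b = 0) :
    ∃! b : ℝ, b ∈ Ioo (1:ℝ) (1 + μ / r) ∧ W b y = y := by
  set B : ℝ := 1 + μ / r with hB
  set s : ℝ := σ ^ 2 / 2 with hs_def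
  have hs : 0 < s := by positivity
  have hμ : 0 < μ := hr.trans hμr
  have hμr1 : 1 < μ / r := (one_lt_div hr).2 hμr
  have hB1 : 1 < B := by linarith
  set p : ℝ → ℝ := fun x => μ - α (max (1 - x) 0) with hp_def
  have hp : Continuous p := by
    have := hα.continuous
    fun_prop
  have hp1 : ∀ x, 1 ≤ x → p x = μ := by
    intro x hx
    simp only [hp_def]
    rw [max_eq_right (by linarith), hα0, sub_zero]
  have dW : ∀ b, Differentiable ℝ (W b) := fun b => (hW b).differentiable (by norm_num)
  have dW1 : ∀ b, Differentiable ℝ (deriv (W b)) := by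
    intro b
    have : ContDiff ℝ 1 (deriv (W b)) := ((contDiff_succ_iff_deriv (n := 1)).1 (hW b)).2.2
    exact this.differentiable (by norm_num)
  have cW2 : ∀ b, Continuous (deriv (deriv (W b))) := by
    intro b
    have := (hW b).continuous_iteratedDeriv 2 le_rfl
    simpa [iteratedDeriv_succ] using this
  have hode' : ∀ b > (0:ℝ), ∀ x ∈ Icc (0:ℝ) b,
      deriv (deriv (W b)) x = (r * W b x - p x * deriv (W b) x) / s := by
    intro b hb x hx
    rw [eq_div_iff hs.ne', hode b hb x hx]
    ring
  have sol : ∀ b > (0:ℝ), IsSol r s p 0 b (W b) (deriv (W b)) := fun b hb =>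
    { cv := (dW b).continuous.continuousOn
      cg := (dW1 b).continuous.continuousOn
      dv := fun x _ => (dW b x).hasDerivAt
      dg := fun x hx => by
        rw [← hode' b hb x ⟨hx.1.le, hx.2.le⟩]
        exact (dW1 b x).hasDerivAt }
  have hWb : ∀ b, 1 ≤ b → W b b = μ / r := by
    intro b hb
    have hb0 : 0 < b := by linarith
    have h := hode b hb0 b ⟨hb0.le, le_rfl⟩
    have hpb := hp1 b hb
    simp only [hp_def] at hpb
    rw [hW'b b hb0, hW''b b hb0, hpb] at h
    rw [eq_div_iff hr.ne']
    linarith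
  -- on `[1, b]` the coefficients are constant, so the derivative of a solution is a solution
  have solD : ∀ b, 1 ≤ b → IsSol r s (fun _ => μ) 1 b
      (fun x => -deriv (W b) x) (fun x => -deriv (deriv (W b)) x) := by
    intro b hb
    refine ⟨(dW1 b).continuous.neg.continuousOn, (cW2 b).neg.continuousOn,
      fun x _ => (dW1 b x).hasDerivAt.neg, fun x hx => ?_⟩
    have e1 : HasDerivAt (deriv (deriv (W b)))
        ((r * deriv (W b) x - μ * deriv (deriv (W b)) x) / s) x := by
      have := (((dW b x).hasDerivAt.const_mul r).sub
        ((dW1 b x).hasDerivAt.const_mul μ)).div_const s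
      refine this.congr_of_eventuallyEq ?_
      filter_upwards [Ioo_mem_nhds hx.1 hx.2] with t ht
      rw [hode' b (by linarith) t ⟨by linarith [ht.1], ht.2.le⟩, hp1 t ht.1.le]
      rfl
    refine HasDerivAt.congr_deriv (e1.neg) ?_
    ring
  have hB0 : 0 < B := by linarith
  obtain ⟨-, hcc⟩ := (solD B hB1.le).neg_and_pos hr hs continuous_const
    (by simp [hW'b B hB0]) (by simp [hW''b B hB0])
  have antiB : StrictAntiOn (deriv (W B)) (Icc 1 B) := by
    refine strictAntiOn_of_deriv_neg (convex_Icc 1 B) (dW1 B).continuous.continuousOn ?_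
    intro x hx
    rw [interior_Icc] at hx
    linarith [hcc x ⟨hx.1.le, hx.2⟩]
  have gt1 : ∀ x ∈ Ico 1 B, 1 < deriv (W B) x := by
    intro x hx
    have := antiB ⟨hx.1, hx.2.le⟩ ⟨hB1.le, le_rfl⟩ hx.2
    rwa [hW'b B hB0] at this
  have monoB : StrictMonoOn (fun x => W B x - x) (Icc 1 B) := by
    have dD : ∀ x, HasDerivAt (fun x => W B x - x) (deriv (W B) x - 1) x := fun x =>
      (dW B x).hasDerivAt.sub (hasDerivAt_id x)
    refine strictMonoOn_of_deriv_pos (convex_Icc 1 B)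
      (fun x _ => (dD x).continuousAt.continuousWithinAt) ?_
    intro x hx
    rw [interior_Icc] at hx
    rw [(dD x).deriv]
    linarith [gt1 x ⟨hx.1.le, hx.2⟩]
  have hWB1 : W B 1 < 0 := by
    have := monoB ⟨le_rfl, hB1.le⟩ ⟨hB1.le, le_rfl⟩ hB1
    simp only [hWb B hB1.le] at this
    linarith
  have hWB1' : 1 < deriv (W B) 1 := gt1 1 ⟨le_rfl, hB1⟩
  have solB : IsSol r s p 0 1 (W B) (deriv (W B)) := (sol B hB0).mono le_rfl hB1.le
  have hfB : W B y < y := by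
    obtain ⟨h, -⟩ := solB.neg_and_pos hr hs hp hWB1 (by linarith)
    linarith [h y ⟨hy.1, hy.2.le⟩, hy.1]
  have hf1 : y < W 1 y := by
    refine gt_id_of_sol (q := fun x => deriv α (1 - x)) hr hs hμr hp ?_ ?_ (hW 1)
      (hode' 1 one_pos) (sol 1 one_pos) (hWb 1 le_rfl) (hW'b 1 one_pos) (hW''b 1 one_pos)
      y ⟨hy.1, hy.2.le⟩
    · intro x hx
      have d1 : HasDerivAt α (deriv α (1 - x)) (1 - x) :=
        (hα.differentiable (by norm_num) _).hasDerivAt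
      have d2 : HasDerivAt (fun x : ℝ => 1 - x) (-1) x := by
        simpa using (hasDerivAt_id x).const_sub 1
      have d3 := (d1.comp x d2).const_sub μ
      have d4 : HasDerivAt (fun x => μ - α (1 - x)) (deriv α (1 - x)) x := by
        refine HasDerivAt.congr_deriv (d3) ?_
        ring
      refine d4.congr_of_eventuallyEq ?_
      filter_upwards [Iio_mem_nhds hx.2] with t ht
      simp only [hp_def]
      rw [max_eq_left (by linarith [mem_Iio.1 ht])]
    · intro x hx
      exact hα' _ (by linarith [hx.2])
  -- for `1 ≤ b ≤ B`, `W b` is on `[1, b]` the translate of `W B` by `B - b`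
  have trans : ∀ b ∈ Icc 1 B, W b 1 = W B (1 + B - b) ∧
      deriv (W b) 1 = deriv (W B) (1 + B - b) := by
    intro b hb
    rcases eq_or_lt_of_le hb.1 with rfl | hb1
    · rw [show 1 + B - 1 = B by ring, hWb 1 le_rfl, hWb B hB1.le, hW'b 1 one_pos, hW'b B hB0]
      exact ⟨rfl, rfl⟩
    have hb0 : 0 < b := by linarith
    have s1 : IsSol r s (fun _ => μ) 1 b (W b) (deriv (W b)) := by
      have h := (sol b hb0).mono zero_le_one le_rfl
      refine ⟨h.cv, h.cg, h.dv, fun x hx => ?_⟩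
      have := h.dg x hx
      rwa [hp1 x hx.1.le] at this
    have s2 : IsSol r s (fun _ => μ) 1 b (fun x => W B (x + (B - b)))
        (fun x => deriv (W B) (x + (B - b))) := by
      refine ⟨?_, ?_, fun x hx => ?_, fun x hx => ?_⟩
      · exact ((dW B).continuous.comp (continuous_add_const _)).continuousOn
      · exact ((dW1 B).continuous.comp (continuous_add_const _)).continuousOn
      · exact (dW B _).hasDerivAt.comp_add_const x (B - b)
      · have hx1 : 1 ≤ x + (B - b) := by linarith [hx.1, hb.2]
        have h := (dW1 B (x + (B - b))).hasDerivAt.comp_add_const x (B - b)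
        rwa [hode' B hB0 _ ⟨by linarith, by linarith [hx.2]⟩, hp1 _ hx1] at h
    have hbB : b + (B - b) = B := by ring
    have key := (s1.lin s2 1 (-1)).eq_zero hr hs continuous_const
      (by simp only [hbB, hWb b hb.1, hWb B hB1.le]; ring)
      (by simp only [hbB, hW'b b hb0, hW'b B hB0]; ring)
      (solD b hb.1) (by simp [hW'b b hb0]) (by simp [hW''b b hb0]) 1 ⟨le_rfl, hb1⟩
    rw [show 1 + (B - b) = 1 + B - b by ring] at key
    constructor <;> linarith [key.1, key.2]
  have solb : ∀ b ∈ Icc 1 B, IsSol r s p 0 1 (W b) (deriv (W b)) := fun b hb =>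
    (sol b (by linarith [hb.1])).mono le_rfl hb.1
  have anti : StrictAntiOn (fun b => W b y) (Icc 1 B) := by
    intro b₁ h₁ b₂ h₂ h12
    have m₁ : 1 + B - b₁ ∈ Icc 1 B := ⟨by linarith [h₁.2], by linarith [h₁.1]⟩
    have m₂ : 1 + B - b₂ ∈ Icc 1 B := ⟨by linarith [h₂.2], by linarith [h₂.1]⟩
    have e1 := monoB m₂ m₁ (by linarith)
    have e2 := antiB m₂ m₁ (by linarith)
    obtain ⟨h, -⟩ := ((solb b₂ h₂).lin (solb b₁ h₁) 1 (-1)).neg_and_pos hr hs hp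
      (by simp only [(trans b₁ h₁).1, (trans b₂ h₂).1] at *; linarith)
      (by simp only [(trans b₁ h₁).2, (trans b₂ h₂).2] at *; linarith)
    have := h y ⟨hy.1, hy.2.le⟩
    show W b₂ y < W b₁ y
    linarith
  have cont : ContinuousOn (fun b => W b y) (Icc 1 B) := by
    -- Cramer's rule for the data at `1`, in terms of those of `W 1` and `W B`
    set d : ℝ := μ / r * deriv (W B) 1 - W B 1 with hd
    have hd0 : 0 < d := by nlinarith
    have rep : ∀ b ∈ Icc 1 B, W b y =
        (W B (1 + B - b) * deriv (W B) 1 - deriv (W B) (1 + B - b) * W B 1) / d * W 1 y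
        + (μ / r * deriv (W B) (1 + B - b) - W B (1 + B - b)) / d * W B y := by
      intro b hb
      set c₁ := (W B (1 + B - b) * deriv (W B) 1 - deriv (W B) (1 + B - b) * W B 1) / d with hc₁
      set c₂ := (μ / r * deriv (W B) (1 + B - b) - W B (1 + B - b)) / d with hc₂
      have hc₁' : c₁ * d = W B (1 + B - b) * deriv (W B) 1 - deriv (W B) (1 + B - b) * W B 1 :=
        div_mul_cancel₀ _ hd0.ne'
      have hc₂' : c₂ * d = μ / r * deriv (W B) (1 + B - b) - W B (1 + B - b) :=
        div_mul_cancel₀ _ hd0.ne'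
      have key := ((solb b hb).lin ((sol 1 one_pos).lin solB c₁ c₂) 1 (-1)).eq_zero hr hs hp
        (by
          simp only [(trans b hb).1, hWb 1 le_rfl]
          apply mul_right_cancel₀ hd0.ne'
          linear_combination (-(μ / r)) * hc₁' - W B 1 * hc₂' + W B (1 + B - b) * hd)
        (by
          simp only [(trans b hb).2, hW'b 1 one_pos]
          apply mul_right_cancel₀ hd0.ne'
          linear_combination (-1) * hc₁' - deriv (W B) 1 * hc₂' + deriv (W B) (1 + B - b) * hd)
        solB hWB1 (by linarith) y hy
      linarith [key.1]
    refine ContinuousOn.congr ?_ rep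
    have c1 := (dW B).continuous
    have c2 := (dW1 B).continuous
    exact Continuous.continuousOn (by fun_prop)
  obtain ⟨b, hb, hby⟩ := intermediate_value_Ioo' hB1.le cont ⟨hfB, hf1⟩
  refine ⟨b, ⟨hb, hby⟩, ?_⟩
  rintro b' ⟨hb', hby'⟩
  exact anti.injOn ⟨hb'.1.le, hb'.2.le⟩ ⟨hb.1.le, hb.2.le⟩ (hby'.trans hby.symm)
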